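/- For every l ≥ 0 and every integer k with τ_l ≤ k ≤ τ_{l+1}: if Ȳ_k = 0 then |S_{k+1}| ∈ {0,1}, and if S_{k+1} = 0 then Ȳ_k = 0. -/

import Mathlib

noncomputable section

/-- The walk `S` associated with the sign sequence `X : {1,2,…} → {−1,1}`:
`S 0 = 0`, `S n = X 1 + ⋯ + X n`. -/
def cvWalk (X : ℕ → ℤ) (n : ℕ) : ℤ := ∑ j ∈ Finset.Icc 1 n, X j

/-- The crossing times of `S`: `τ 0 = 0` and
`τ (l+1) = min {i > τ l : S (i-1) * S (i+1) < 0}`. -/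
def cvTau (X : ℕ → ℤ) : ℕ → ℕ
  | 0 => 0
  | l + 1 => sInf {i : ℕ | cvTau X l < i ∧ cvWalk X (i - 1) * cvWalk X (i + 1) < 0}

/-- The increments of the Csaki–Vincze transform `S̄ = T(S)`:
`X̄ j = Σ_{l ≥ 0} (−1)^(l+1) · X 1 · X (j+1) · 1_{τ l + 1 ≤ j ≤ τ (l+1)}`
(the sum may be truncated to `l ≤ j` since `l ≤ τ l` whenever `τ l + 1 ≤ j`). -/
def cvXbar (X : ℕ → ℤ) (j : ℕ) : ℤ :=
  ∑ l ∈ Finset.range (j + 1),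
    (-1 : ℤ) ^ (l + 1) * X 1 * X (j + 1) *
      (if cvTau X l + 1 ≤ j ∧ j ≤ cvTau X (l + 1) then 1 else 0)

/-- The Csaki–Vincze transform `S̄ = T(S)`. -/
def cvSbar (X : ℕ → ℤ) (n : ℕ) : ℤ := ∑ j ∈ Finset.Icc 1 n, cvXbar X j

/-- `Ȳ`-type process of a walk `f`: `max_{0 ≤ k ≤ n} f k − f n`. -/
def cvYof (f : ℕ → ℤ) (n : ℕ) : ℤ :=
  (Finset.range (n + 1)).sup' Finset.nonempty_range_add_one f - f n

/-- `Ȳ n = max_{0 ≤ k ≤ n} S̄ k − S̄ n`. -/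
def cvYbar (X : ℕ → ℤ) (n : ℕ) : ℤ := cvYof (cvSbar X) n

theorem cvW_succ (X : ℕ → ℤ) (n : ℕ) : cvWalk X (n + 1) = cvWalk X n + X (n + 1) := by
  unfold cvWalk
  rw [Finset.sum_Icc_succ_top (by omega)]

theorem cvS_succ (X : ℕ → ℤ) (n : ℕ) : cvSbar X (n + 1) = cvSbar X n + cvXbar X (n + 1) := by
  unfold cvSbar
  rw [Finset.sum_Icc_succ_top (by omega)]

theorem cvTau_spec (X : ℕ → ℤ)
    (hinf : {i : ℕ | 1 ≤ i ∧ cvWalk X (i - 1) * cvWalk X (i + 1) < 0}.Infinite) (l : ℕ) :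
    cvTau X l < cvTau X (l + 1) ∧
      cvWalk X (cvTau X (l + 1) - 1) * cvWalk X (cvTau X (l + 1) + 1) < 0 := by
  obtain ⟨i, hi, hl⟩ := hinf.exists_gt (cvTau X l)
  have hne : {i : ℕ | cvTau X l < i ∧ cvWalk X (i - 1) * cvWalk X (i + 1) < 0}.Nonempty :=
    ⟨i, hl, hi.2⟩
  exact Nat.sInf_mem hne

theorem cvTau_min (X : ℕ → ℤ) (l i : ℕ) (h1 : cvTau X l < i) (h2 : i < cvTau X (l + 1)) :
    0 ≤ cvWalk X (i - 1) * cvWalk X (i + 1) := by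
  by_contra h
  have : cvTau X (l + 1) ≤ i := Nat.sInf_le ⟨h1, not_le.mp h⟩
  omega

theorem cvXbar_eq (X : ℕ → ℤ) (hm : StrictMono (cvTau X)) (l j : ℕ)
    (h1 : cvTau X l < j) (h2 : j ≤ cvTau X (l + 1)) :
    cvXbar X j = - ((-1 : ℤ) ^ l * X 1) * X (j + 1) := by
  unfold cvXbar
  rw [Finset.sum_eq_single l]
  · rw [if_pos ⟨h1, h2⟩]; ring
  · intro b _ hb
    rw [if_neg, mul_zero]
    rintro ⟨h3, h4⟩
    rcases lt_or_gt_of_ne hb with h | h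
    · have := hm.monotone (show b + 1 ≤ l by omega)
      omega
    · have := hm.monotone (show l + 1 ≤ b by omega)
      omega
  · intro h
    have := hm.id_le l
    simp at h this
    omega

theorem cv_inner (X : ℕ → ℤ) (hX : ∀ j, 1 ≤ j → X j = 1 ∨ X j = -1)
    (hm : StrictMono (cvTau X)) (l : ℕ) (s : ℤ) (hsd : s = (-1 : ℤ) ^ l * X 1)
    (hs : s = 1 ∨ s = -1)
    (hB : cvSbar X (cvTau X l) = 2 * l) (hW : s * cvWalk X (cvTau X l + 1) = 1) (d : ℕ) :
    (cvTau X l + d ≤ cvTau X (l + 1) →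
      cvSbar X (cvTau X l + d) = 2 * l + 1 - s * cvWalk X (cvTau X l + d + 1)) ∧
    (cvTau X l + d < cvTau X (l + 1) → 0 ≤ s * cvWalk X (cvTau X l + d + 1)) := by
  induction d using Nat.strong_induction_on with
  | _ d ih =>
    rcases d with _ | d
    · simp only [add_zero]
      exact ⟨fun _ => by rw [hB, hW]; ring, fun _ => by rw [hW]; norm_num⟩
    constructor
    · intro h
      have h1 := (ih d (by omega)).1 (by omega)
      have h2 := cvXbar_eq X hm l (cvTau X l + d + 1) (by omega) (by omega)
      rw [← add_assoc, cvS_succ, cvW_succ X (cvTau X l + d + 1), h1, h2, ← hsd]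
      ring
    · intro h
      have h1 := (ih d (by omega)).2 (by omega)
      have h2 := cvTau_min X l (cvTau X l + d + 1) (by omega) (by omega)
      have e1 := cvW_succ X (cvTau X l + d + 1)
      have e0 := cvW_succ X (cvTau X l + d)
      have x1 := hX (cvTau X l + d + 1 + 1) (by omega)
      have x0 := hX (cvTau X l + d + 1) (by omega)
      rw [← add_assoc]
      simp only [Nat.add_sub_cancel] at h2
      rcases d with _ | d
      · simp only [add_zero] at *
        rcases hs with rfl | rfl <;> rcases x1 with x1 | x1 <;> rw [x1] at e1 <;> omega
      · have h3 := (ih d (by omega)).2 (by omega)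
        rw [← add_assoc] at *
        generalize cvWalk X (cvTau X l + d + 1 + 1 + 1) = c at *
        generalize cvWalk X (cvTau X l + d + 1 + 1) = b at *
        generalize cvWalk X (cvTau X l + d + 1) = a at *
        by_contra hc
        have hb : b = 0 := by
          rcases hs with rfl | rfl <;> rcases x1 with x1 | x1 <;> omega
        subst hb
        have ha : a = s := by
          rcases hs with rfl | rfl <;> rcases x0 with x0 | x0 <;> omega
        rw [ha] at h2
        exact hc h2

theorem cv_outer (X : ℕ → ℤ) (hX : ∀ j, 1 ≤ j → X j = 1 ∨ X j = -1)
    (hinf : {i : ℕ | 1 ≤ i ∧ cvWalk X (i - 1) * cvWalk X (i + 1) < 0}.Infinite)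
    (hm : StrictMono (cvTau X)) (l : ℕ) :
    cvSbar X (cvTau X l) = 2 * l ∧ ((-1 : ℤ) ^ l * X 1) * cvWalk X (cvTau X l + 1) = 1 ∧
    ∀ j ≤ cvTau X l, cvSbar X j ≤ 2 * l := by
  induction l with
  | zero =>
    refine ⟨by simp [cvTau, cvSbar], ?_, ?_⟩
    · rcases hX 1 le_rfl with h | h <;> simp [cvTau, cvWalk, h]
    · intro j hj
      have : j = 0 := by simpa [cvTau] using hj
      subst this
      simp [cvSbar]
  | succ l ih =>
    obtain ⟨hB, hW, hM⟩ := ih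
    have hs : (-1 : ℤ) ^ l * X 1 = 1 ∨ (-1 : ℤ) ^ l * X 1 = -1 := by
      rcases hX 1 le_rfl with h | h <;> rcases neg_one_pow_eq_or ℤ l with h' | h' <;>
        simp [h, h']
    have hin := cv_inner X hX hm l _ rfl hs hB hW
    obtain ⟨hlt, hcr⟩ := cvTau_spec X hinf l
    have e : (-1 : ℤ) ^ (l + 1) * X 1 = - ((-1 : ℤ) ^ l * X 1) := by ring
    rw [e]
    generalize (-1 : ℤ) ^ l * X 1 = s at *
    obtain ⟨d, hd⟩ : ∃ d, cvTau X (l + 1) = cvTau X l + d + 1 :=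
      ⟨cvTau X (l + 1) - cvTau X l - 1, by omega⟩
    have key : s * cvWalk X (cvTau X (l + 1) + 1) = -1 := by
      have h1 := (hin d).2 (by omega)
      rw [hd] at hcr ⊢
      have e1 := cvW_succ X (cvTau X l + d + 1)
      have e0 := cvW_succ X (cvTau X l + d)
      have x1 := hX (cvTau X l + d + 1 + 1) (by omega)
      have x0 := hX (cvTau X l + d + 1) (by omega)
      simp only [Nat.add_sub_cancel] at hcr
      have hb : cvWalk X (cvTau X l + d + 1) = 0 := by
        rcases mul_neg_iff.mp hcr with h | h <;> omega
      rcases d with _ | d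
      · simp only [add_zero] at *
        rw [hb] at hW
        simp at hW
      · have h3 := (hin d).2 (by omega)
        rw [← add_assoc] at *
        generalize cvWalk X (cvTau X l + d + 1 + 1 + 1) = c at *
        generalize cvWalk X (cvTau X l + d + 1 + 1) = b at *
        generalize cvWalk X (cvTau X l + d + 1) = a at *
        subst hb
        rcases mul_neg_iff.mp hcr with h | h <;> rcases hs with rfl | rfl <;> omega
    have hend : cvSbar X (cvTau X (l + 1)) = 2 * l + 2 := by
      have := (hin (d + 1)).1 (by omega)
      rw [← add_assoc, ← hd, key] at this
      rw [this]; ring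
    refine ⟨by rw [hend]; push_cast; ring, by rw [neg_mul, key]; norm_num, ?_⟩
    intro j hj
    push_cast
    rcases le_or_gt j (cvTau X l) with h | h
    · have := hM j h
      omega
    rcases eq_or_lt_of_le hj with h' | h'
    · rw [h', hend]; omega
    · obtain ⟨q, rfl⟩ := Nat.exists_eq_add_of_le h.le
      have h1 := (hin q).1 hj
      have h2 := (hin q).2 h'
      omega

/-- For every `l ≥ 0` and every `k` with `τ l ≤ k ≤ τ (l+1)`: if `Ȳ k = 0` then
`|S (k+1)| ∈ {0,1}`, and if `S (k+1) = 0` then `Ȳ k = 0`. -/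
theorem cv_ybar_zero_walk (X : ℕ → ℤ) (hX : ∀ j, 1 ≤ j → X j = 1 ∨ X j = -1)
    (hinf : {i : ℕ | 1 ≤ i ∧ cvWalk X (i - 1) * cvWalk X (i + 1) < 0}.Infinite)
    (l k : ℕ) (hk1 : cvTau X l ≤ k) (hk2 : k ≤ cvTau X (l + 1)) :
    (cvYbar X k = 0 → abs (cvWalk X (k + 1)) = 0 ∨ abs (cvWalk X (k + 1)) = 1) ∧
    (cvWalk X (k + 1) = 0 → cvYbar X k = 0) := by
  have hm : StrictMono (cvTau X) := strictMono_nat_of_lt_succ fun l => (cvTau_spec X hinf l).1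
  have hs : (-1 : ℤ) ^ l * X 1 = 1 ∨ (-1 : ℤ) ^ l * X 1 = -1 := by
    rcases hX 1 le_rfl with h | h <;> rcases neg_one_pow_eq_or ℤ l with h' | h' <;>
      simp [h, h']
  obtain ⟨hB, hW, hM⟩ := cv_outer X hX hinf hm l
  obtain ⟨-, hW', -⟩ := cv_outer X hX hinf hm (l + 1)
  have hin := cv_inner X hX hm l _ rfl hs hB hW
  have e : (-1 : ℤ) ^ (l + 1) * X 1 = - ((-1 : ℤ) ^ l * X 1) := by ring
  rw [e] at hW'
  generalize (-1 : ℤ) ^ l * X 1 = s at *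
  rcases eq_or_lt_of_le hk2 with hk | hk
  · rw [← hk] at hW'
    have : abs (cvWalk X (k + 1)) = 1 := by
      rcases hs with rfl | rfl
      · rw [show cvWalk X (k + 1) = -1 by omega]; rfl
      · rw [show cvWalk X (k + 1) = 1 by omega]; rfl
    refine ⟨fun _ => Or.inr this, fun h => ?_⟩
    rw [h] at this
    simp at this
  obtain ⟨q, rfl⟩ := Nat.exists_eq_add_of_le hk1
  have h1 := (hin q).1 hk2
  have h2 := (hin q).2 hk
  unfold cvYbar cvYof
  constructor
  · intro h
    have h3 := Finset.le_sup' (cvSbar X) (b := cvTau X l)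
      (s := Finset.range (cvTau X l + q + 1)) (by simp)
    have h4 : s * cvWalk X (cvTau X l + q + 1) ≤ 1 := by omega
    generalize cvWalk X (cvTau X l + q + 1) = w at *
    rcases hs with rfl | rfl <;> rcases abs_cases w with h5 | h5 <;> omega
  · intro h
    rw [h, mul_zero, sub_zero] at h1
    refine sub_eq_zero.mpr (le_antisymm ?_ (Finset.le_sup' (cvSbar X) (by simp)))
    refine Finset.sup'_le _ _ fun j hj => ?_
    rw [Finset.mem_range] at hj
    rw [h1]
    rcases le_or_gt j (cvTau X l) with h | h
    · have := hM j h
      omega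
    · obtain ⟨r, rfl⟩ := Nat.exists_eq_add_of_le h.le
      have h5 := (hin r).1 (by omega)
      have h6 := (hin r).2 (by omega)
      omega
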